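/- Let P(X) ∈ (F_q[T])[X] be an irreducible polynomial of degree n ≥ 2 and inseparable degree f. Then for any two distinct roots α, β of P(X) in the algebraic closure of F_q(T), one has |α − β| ≥ H(P)^{−n/f² + 1/f}. -/

import Mathlib

open Polynomial Filter
open scoped ENNReal

noncomputable section

namespace Ooto

variable (Fq : Type) [Field Fq] [Fintype Fq]

/-- `F_q((T⁻¹))`, realized as formal Laurent series in the variable `X = T⁻¹`. -/
abbrev K := LaurentSeries Fq

/-- The element `T = X⁻¹` of `F_q((T⁻¹))`. -/
def TT : K Fq := HahnSeries.single (-1 : ℤ) (1 : Fq)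

/-- The natural embedding of `F_q[T]` into `F_q((T⁻¹))`, sending `T` to `T`. -/
def polyToK : Polynomial Fq →+* K Fq := Polynomial.eval₂RingHom HahnSeries.C (TT Fq)

open Classical in
/-- The absolute value on `F_q((T⁻¹))`: `|0| = 0` and `|ξ| = q^{-N}` where `N` is the order
of `ξ` as a series in `T⁻¹`. -/
def kabs (f : K Fq) : ℝ := if f = 0 then 0 else (Fintype.card Fq : ℝ) ^ (-f.order)

/-- A fixed algebraic closure of `F_q((T⁻¹))`. -/
abbrev L := AlgebraicClosure (K Fq)

def toL : K Fq →+* L Fq := algebraMap (K Fq) (L Fq)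

def φ : Polynomial Fq →+* L Fq := (toL Fq).comp (polyToK Fq)

/-- Evaluation of `P ∈ (F_q[T])[X]` at `ξ ∈ F_q((T⁻¹))`. -/
def evalK (P : Polynomial (Polynomial Fq)) (ξ : K Fq) : K Fq :=
  Polynomial.eval₂ (polyToK Fq) ξ P

/-- Evaluation of `P ∈ (F_q[T])[X]` at a point of the algebraic closure. -/
def evalL (P : Polynomial (Polynomial Fq)) (α : L Fq) : L Fq :=
  Polynomial.eval₂ (φ Fq) α P

/-- Height of a polynomial over `F_q[T]`: the maximum of the absolute values of its
coefficients. -/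
def Hpoly (P : Polynomial (Polynomial Fq)) : ℝ := ⨆ i : ℕ, kabs Fq (polyToK Fq (P.coeff i))

/-- `P` is the minimal polynomial of `α`: a non-constant irreducible primitive polynomial in
`(F_q[T])[X]` whose leading coefficient is monic in `T`, vanishing at `α`. -/
def IsMinPolyOf (P : Polynomial (Polynomial Fq)) (α : L Fq) : Prop :=
  0 < P.natDegree ∧ Irreducible P ∧ P.IsPrimitive ∧ (P.leadingCoeff).Monic ∧ evalL Fq P α = 0

/-- `α` is algebraic over `F_q(T)`. -/
def IsAlgElem (α : L Fq) : Prop := ∃ P, IsMinPolyOf Fq P α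

open Classical in
/-- The minimal polynomial of an algebraic element (junk value `0` otherwise). -/
def minPolyPrim (α : L Fq) : Polynomial (Polynomial Fq) :=
  if h : IsAlgElem Fq α then h.choose else 0

/-- Degree of an algebraic element. -/
def degAlg (α : L Fq) : ℕ := (minPolyPrim Fq α).natDegree

/-- Height of an algebraic element. -/
def heightAlg (α : L Fq) : ℝ := Hpoly Fq (minPolyPrim Fq α)

/-- Inseparable degree of a polynomial `P ∈ (F_q[T])[X]`: the largest power `f = p^j` of the
characteristic such that `P(X) = R(X^f)` for some `R`. -/
def insepDeg (P : Polynomial (Polynomial Fq)) : ℕ :=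
  (ringChar Fq) ^ sSup {j : ℕ | ∃ R : Polynomial (Polynomial Fq),
    P = R.comp (Polynomial.X ^ (ringChar Fq) ^ j)}

/-- Inseparable degree of an algebraic element. -/
def insepAlg (α : L Fq) : ℕ := insepDeg Fq (minPolyPrim Fq α)

/-- `α'` is the Galois conjugate of the quadratic element `α` (equal to `α` itself in the
inseparable case): the minimal polynomial of `α` factors as `A(X - α)(X - α')`. -/
def IsConjOf (α' α : L Fq) : Prop :=
  (minPolyPrim Fq α).natDegree = 2 ∧
  (minPolyPrim Fq α).map (φ Fq) =
    Polynomial.C (φ Fq (minPolyPrim Fq α).leadingCoeff) *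
      (Polynomial.X - Polynomial.C α) * (Polynomial.X - Polynomial.C α')

/-- `v` is an absolute value on the algebraic closure of `F_q((T⁻¹))` extending `kabs`
(such an extension exists and is unique). -/
structure IsAbsExt (v : L Fq → ℝ) : Prop where
  eq_zero_iff : ∀ x, v x = 0 ↔ x = 0
  map_mul : ∀ x y, v (x * y) = v x * v y
  add_le : ∀ x y, v (x + y) ≤ max (v x) (v y)
  nonneg : ∀ x, 0 ≤ v x
  extends_kabs : ∀ f : K Fq, v (toL Fq f) = kabs Fq f

/-- The exponent `w_n(ξ)`: the supremum of the real numbers `w` such that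
`0 < |P(ξ)| ≤ H(P)^{-w}` for infinitely many `P ∈ (F_q[T])[X]` of degree at most `n`. -/
def wExp (n : ℕ) (ξ : K Fq) : EReal :=
  sSup {x : EReal | ∃ w : ℝ, x = (w : EReal) ∧
    {P : Polynomial (Polynomial Fq) | P.natDegree ≤ n ∧ 0 < kabs Fq (evalK Fq P ξ) ∧
      kabs Fq (evalK Fq P ξ) ≤ Hpoly Fq P ^ (-w)}.Infinite}

/-- The exponent `w_n^*(ξ)`: the supremum of the real numbers `w` such that
`0 < |ξ - α| ≤ H(α)^{-w-1}` for infinitely many algebraic `α` of degree at most `n`. -/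
def wStarExp (v : L Fq → ℝ) (n : ℕ) (ξ : K Fq) : EReal :=
  sSup {x : EReal | ∃ w : ℝ, x = (w : EReal) ∧
    {α : L Fq | IsAlgElem Fq α ∧ degAlg Fq α ≤ n ∧ 0 < v (toL Fq ξ - α) ∧
      v (toL Fq ξ - α) ≤ heightAlg Fq α ^ (-w - 1)}.Infinite}

/-- `pSeq a n = p_{n-1}`, the numerators of the convergents of `[a 0; a 1, a 2, …]`
(with `p_{-1} = 1`). -/
def pSeq (a : ℕ → Polynomial Fq) : ℕ → Polynomial Fq
  | 0 => 1
  | 1 => a 0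
  | (n+2) => a (n+1) * pSeq a (n+1) + pSeq a n

/-- `qSeq a n = q_{n-1}`, the denominators of the convergents of `[a 0; a 1, a 2, …]`
(with `q_{-1} = 0`). -/
def qSeq (a : ℕ → Polynomial Fq) : ℕ → Polynomial Fq
  | 0 => 0
  | 1 => 1
  | (n+2) => a (n+1) * qSeq a (n+1) + qSeq a n

/-- `ξ` has continued fraction expansion `[a 0; a 1, a 2, …]`: each partial quotient `a n`
(`n ≥ 1`) has degree at least one and `|ξ - p_n/q_n| = |q_n|⁻¹|q_{n+1}|⁻¹` for all `n ≥ 0`. -/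
def IsCFOf (ξ : K Fq) (a : ℕ → Polynomial Fq) : Prop :=
  (∀ n, 1 ≤ n → 1 ≤ (a n).natDegree) ∧
  ∀ n : ℕ,
    kabs Fq (ξ - polyToK Fq (pSeq Fq a (n+1)) / polyToK Fq (qSeq Fq a (n+1))) =
      (kabs Fq (polyToK Fq (qSeq Fq a (n+1))) * kabs Fq (polyToK Fq (qSeq Fq a (n+2))))⁻¹

/-- The sequence of partial quotients of `[0; b 0, b 1, b 2, …]`. -/
def cfA (b : ℕ → Polynomial Fq) : ℕ → Polynomial Fq := fun n => if n = 0 then 0 else b (n - 1)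

/-- `qden b n` is the denominator `q_n` of the `n`-th convergent of `[0; b 0, b 1, …]`. -/
def qden (b : ℕ → Polynomial Fq) (n : ℕ) : Polynomial Fq := qSeq Fq (cfA Fq b) (n + 1)

/-- `V^w` for a finite word `V` and a real `w ≥ 0`: `⌊w⌋` copies of `V` followed by the prefix
of `V` of length `⌈(w - ⌊w⌋)|V|⌉`. -/
def wordPow {A : Type*} (V : List A) (w : ℝ) : List A :=
  (List.replicate ⌊w⌋₊ V).flatten ++ V.take ⌈(w - ⌊w⌋₊) * V.length⌉₊

/-- The finite word `l` is a prefix of the infinite word `b`. -/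
def IsPrefixOfSeq {A : Type*} (l : List A) (b : ℕ → A) : Prop :=
  ∀ (i : ℕ) (h : i < l.length), l.get ⟨i, h⟩ = b i

/-- Condition `(*)_ρ` for an infinite word. -/
def SatisfiesCond {A : Type*} (b : ℕ → A) (ρ : ℝ) : Prop :=
  ∃ (U V : ℕ → List A) (w : ℕ → ℝ),
    (∀ n, V n ≠ []) ∧ (∀ n, 0 ≤ w n) ∧
    (∀ n, IsPrefixOfSeq (U n ++ wordPow (V n) (w n)) b) ∧
    (∀ n, ρ * (((U n).length + (V n).length : ℕ) : ℝ) ≤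
      (((U n).length + (wordPow (V n) (w n)).length : ℕ) : ℝ)) ∧
    StrictMono fun n => (wordPow (V n) (w n)).length

/-- The Diophantine exponent of an infinite word: the supremum of the `ρ` such that the word
satisfies Condition `(*)_ρ`. -/
def dioExp {A : Type*} (b : ℕ → A) : EReal :=
  sSup {x : EReal | ∃ ρ : ℝ, x = (ρ : EReal) ∧ SatisfiesCond b ρ}

/-- The complexity function: the number of distinct blocks of `n` consecutive letters. -/
def complexity {A : Type*} (b : ℕ → A) (n : ℕ) : ℕ∞ :=
  {w : Fin n → A | ∃ i : ℕ, ∀ k : Fin n, w k = b (i + k)}.encard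

/-- The infinite word `b` is ultimately periodic. -/
def UltimatelyPeriodic {A : Type*} (b : ℕ → A) : Prop :=
  ∃ N T : ℕ, 0 < T ∧ ∀ n, N ≤ n → b (n + T) = b n

/-! Let `R` be separable of degree `d`. Dividing each root difference `γ - δ` by
`max 1 |γ| * max 1 |δ|` turns the formula for the discriminant into
`|disc R| = H(R) ^ (2 * (d - 1)) * ∏ ‖γ, δ‖`, where
`(γ, δ)` runs over the ordered pairs of distinct roots and `‖γ, δ‖ ≤ 1` is the chordal distance: the
Gauss norm `H(R)` is multiplicative, hence equal to the leading coefficient times the product of the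
`max 1 |γ|`. The discriminant is a nonzero polynomial in `T`, so `|disc R| ≥ 1`, and keeping only
the factors `(γ, δ)` and `(δ, γ)` gives `1 ≤ H(R) ^ (d - 1) * |γ - δ|`. An irreducible `P` of
inseparable degree `f` is `R (X ^ f)` with `R` separable of the same height and degree `n / f`, and
`|α ^ f - β ^ f| = |α - β| ^ f`. -/

section OffDiag

variable {ι M : Type*} [CommMonoid M]

theorem prod_offDiag_eq_prod_prod_erase [DecidableEq ι] (s : Finset ι) (f : ι × ι → M) :
    ∏ p ∈ s.offDiag, f p = ∏ x ∈ s, ∏ y ∈ s.erase x, f (x, y) :=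
  Finset.prod_finset_product _ s (fun x => s.erase x) (by grind)

theorem prod_offDiag_mul (s : Finset ι) (f : ι → M) :
    ∏ p ∈ s.offDiag, f p.1 * f p.2 = (∏ x ∈ s, f x) ^ (2 * (s.card - 1)) := by
  classical
  have hfst : ∏ p ∈ s.offDiag, f p.1 = (∏ x ∈ s, f x) ^ (s.card - 1) := by
    rw [prod_offDiag_eq_prod_prod_erase, ← Finset.prod_pow]
    exact Finset.prod_congr rfl fun x hx => by
      simp only [Finset.prod_const, Finset.card_erase_of_mem hx]
  have hsnd : ∏ p ∈ s.offDiag, f p.2 = ∏ p ∈ s.offDiag, f p.1 :=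
    Finset.prod_equiv (Equiv.prodComm ι ι) (by grind) fun _ _ => rfl
  rw [Finset.prod_mul_distrib, hsnd, hfst, two_mul, pow_add]

end OffDiag

section Discriminant

variable {R : Type*} [CommRing R] [IsDomain R]

theorem eval_derivative_of_mem_roots [DecidableEq R] {Q : R[X]} (hQ : Q.Splits) {x : R}
    (hx : x ∈ Q.roots) :
    Q.derivative.eval x = Q.leadingCoeff * ((Q.roots.erase x).map (x - ·)).prod := by
  conv_lhs => rw [hQ.eq_prod_roots]
  rw [derivative_C_mul, eval_C_mul, eval_multiset_prod_X_sub_C_derivative hx]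

theorem prod_eval_derivative_roots [DecidableEq R] {Q : R[X]} (hQ : Q.Splits)
    (hnodup : Q.roots.Nodup) :
    (Q.roots.map Q.derivative.eval).prod =
      Q.leadingCoeff ^ Q.natDegree * ∏ p ∈ Q.roots.toFinset.offDiag, (p.1 - p.2) := by
  set s := Q.roots.toFinset
  have hval : s.val = Q.roots := by rw [Multiset.toFinset_val, hnodup.dedup]
  have hcard : s.card = Q.natDegree := by
    rw [Multiset.toFinset_card_of_nodup hnodup, hQ.natDegree_eq_card_roots]
  calc (Q.roots.map Q.derivative.eval).prod
      = ∏ x ∈ s, Q.derivative.eval x := by rw [Finset.prod, hval]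
    _ = ∏ x ∈ s, Q.leadingCoeff * ∏ y ∈ s.erase x, (x - y) :=
        Finset.prod_congr rfl fun x hx => by
          rw [eval_derivative_of_mem_roots hQ (Multiset.mem_toFinset.1 hx), Finset.prod,
            Finset.erase_val, hval]
    _ = Q.leadingCoeff ^ Q.natDegree * ∏ p ∈ s.offDiag, (p.1 - p.2) := by
        rw [Finset.prod_mul_distrib, Finset.prod_const, hcard, prod_offDiag_eq_prod_prod_erase]

theorem discr_eq_prod_roots_sub [DecidableEq R] {Q : R[X]} (hQ : Q.Splits)
    (hnodup : Q.roots.Nodup) :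
    (-1) ^ (Q.natDegree * (Q.natDegree - 1) / 2) * Q.discr =
      Q.leadingCoeff ^ (2 * (Q.natDegree - 1)) *
        ∏ p ∈ Q.roots.toFinset.offDiag, (p.1 - p.2) := by
  rcases Nat.eq_zero_or_pos Q.natDegree with hdeg | hdeg
  · rw [eq_C_of_natDegree_eq_zero hdeg]
    simp
  have hlead : Q.leadingCoeff ≠ 0 := leadingCoeff_ne_zero.2 (ne_zero_of_natDegree_gt hdeg)
  have hres := (resultant_deriv (natDegree_pos_iff_degree_pos.1 hdeg)).symm.trans
    (resultant_eq_prod_eval Q Q.derivative _ (natDegree_derivative_le Q) hQ)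
  rw [prod_eval_derivative_roots hQ hnodup] at hres
  refine mul_left_cancel₀ hlead ?_
  calc Q.leadingCoeff * ((-1) ^ (Q.natDegree * (Q.natDegree - 1) / 2) * Q.discr)
      = (-1) ^ (Q.natDegree * (Q.natDegree - 1) / 2) * Q.leadingCoeff * Q.discr := by ring
    _ = Q.leadingCoeff ^ (Q.natDegree - 1 + Q.natDegree) *
          ∏ p ∈ Q.roots.toFinset.offDiag, (p.1 - p.2) := by rw [hres, pow_add, mul_assoc]
    _ = Q.leadingCoeff * (Q.leadingCoeff ^ (2 * (Q.natDegree - 1)) *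
          ∏ p ∈ Q.roots.toFinset.offDiag, (p.1 - p.2)) := by
        rw [← mul_assoc, ← pow_succ']
        congr 2
        lia

theorem discr_ne_zero_of_nodup_roots {Q : R[X]}
    (hQ : Q.Splits) (hQ0 : Q ≠ 0) (hnodup : Q.roots.Nodup) : Q.discr ≠ 0 := by
  classical
  refine right_ne_zero_of_mul (a := (-1) ^ (Q.natDegree * (Q.natDegree - 1) / 2)) ?_
  rw [discr_eq_prod_roots_sub hQ hnodup]
  refine mul_ne_zero (pow_ne_zero _ (leadingCoeff_ne_zero.2 hQ0)) (Finset.prod_ne_zero_iff.2 ?_)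
  exact fun p hp => sub_ne_zero.2 (Finset.mem_offDiag.1 hp).2.2

theorem discr_map_of_injective {A B : Type*} [CommRing A] [CommRing B] [IsDomain B] {ψ : A →+* B}
    (hψ : Function.Injective ψ) (P : A[X]) : (P.map ψ).discr = ψ P.discr := by
  have hnat : (P.map ψ).natDegree = P.natDegree := natDegree_map_eq_of_injective hψ P
  rcases Nat.eq_zero_or_pos P.natDegree with hdeg | hdeg
  · rw [eq_C_of_natDegree_eq_zero hdeg, Polynomial.map_C, discr_C, discr_C, map_one]
  have hlead : (P.map ψ).leadingCoeff ≠ 0 :=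
    leadingCoeff_ne_zero.2 (ne_zero_of_natDegree_gt (hnat ▸ hdeg))
  have hmap := congrArg ψ (resultant_deriv (natDegree_pos_iff_degree_pos.1 hdeg))
  rw [← resultant_map_map, ← derivative_map, ← hnat,
    resultant_deriv (natDegree_pos_iff_degree_pos.1 (hnat ▸ hdeg)), map_mul, map_mul, map_pow,
    map_neg, map_one, ← leadingCoeff_map_of_injective hψ] at hmap
  exact mul_left_cancel₀ (mul_ne_zero (pow_ne_zero _ (neg_ne_zero.2 one_ne_zero)) hlead) hmap

end Discriminant

section GaussNorm

variable {E : Type*} [CommRing E] {w : AbsoluteValue E ℝ}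

theorem gaussNorm_expand {R F : Type*} [CommSemiring R] [FunLike F R ℝ] [ZeroHomClass F R ℝ]
    [NonnegHomClass F R ℝ] (v : F) {c : ℝ} (hc : 0 ≤ c) {n : ℕ} (hn : 0 < n) (P : R[X]) :
    (expand R n P).gaussNorm v c = P.gaussNorm v (c ^ n) := by
  apply le_antisymm
  · obtain ⟨i, hi⟩ := exists_eq_gaussNorm v c (expand R n P)
    rw [hi, coeff_expand hn]
    split_ifs with hdvd
    · obtain ⟨j, rfl⟩ := hdvd
      rw [Nat.mul_div_cancel_left j hn, pow_mul]
      exact le_gaussNorm v P (pow_nonneg hc n) j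
    · rw [map_zero, zero_mul]
      exact gaussNorm_nonneg v P (pow_nonneg hc n)
  · obtain ⟨i, hi⟩ := exists_eq_gaussNorm v (c ^ n) P
    rw [hi, ← coeff_expand_mul' hn, ← pow_mul]
    exact le_gaussNorm v _ hc _

theorem gaussNorm_one_X_sub_C [Nontrivial E] (w : AbsoluteValue E ℝ) (x : E) :
    (X - C x).gaussNorm w 1 = max 1 (w x) := by
  have hcoeff_zero : w ((X - C x).coeff 0) = w x := by simp
  have hcoeff_one : w ((X - C x).coeff 1) = 1 := by simp [coeff_X_one]
  have hle (i : ℕ) : w ((X - C x).coeff i) ≤ (X - C x).gaussNorm w 1 := by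
    simpa only [one_pow, mul_one] using le_gaussNorm w (X - C x) zero_le_one i
  apply le_antisymm
  · obtain ⟨i, hi⟩ := exists_eq_gaussNorm w 1 (X - C x)
    rw [hi, one_pow, mul_one]
    match i with
    | 0 => exact hcoeff_zero.trans_le (le_max_right _ _)
    | 1 => exact hcoeff_one.trans_le (le_max_left _ _)
    | i + 2 => simp [coeff_X]
  · exact max_le (hcoeff_one.symm.trans_le (hle 1)) (hcoeff_zero.symm.trans_le (hle 0))

theorem gaussNorm_one_eq_leadingCoeff_mul_prod_roots [IsDomain E] (hw : IsNonarchimedean w)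
    {Q : E[X]} (hQ : Q.Splits) :
    Q.gaussNorm w 1 = w Q.leadingCoeff * (Q.roots.map fun x => max 1 (w x)).prod := by
  have := gaussNorm_isAbsoluteValue hw one_pos
  have hprod := map_multiset_prod (IsAbsoluteValue.toAbsoluteValue (gaussNorm w 1))
    (Q.roots.map (X - C ·))
  conv_lhs => rw [hQ.eq_prod_roots]
  rw [gaussNorm_mul hw one_pos, gaussNorm_C]
  congr 1
  refine hprod.trans ?_
  rw [Multiset.map_map]
  exact congrArg _ (Multiset.map_congr rfl fun x _ => gaussNorm_one_X_sub_C w x)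

theorem gaussNorm_pos {Q : E[X]} (hQ : Q ≠ 0) : 0 < Q.gaussNorm w 1 :=
  (gaussNorm_nonneg w Q zero_le_one).lt_of_ne' <|
    (gaussNorm_eq_zero_iff w Q (fun _ => w.eq_zero.1) one_pos).not.2 hQ

end GaussNorm

section ChordalDist

variable {E : Type*} [CommRing E] {w : AbsoluteValue E ℝ}

/-- The chordal distance of the points `[x : 1]` and `[y : 1]` of the projective line over a
field with a nonarchimedean absolute value `w`: the homogeneous form of `w (x - y)`, which is
bounded by `1`. -/
def chordalDist (w : AbsoluteValue E ℝ) (x y : E) : ℝ :=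
  w (x - y) / (max 1 (w x) * max 1 (w y))

theorem chordalDist_nonneg (x y : E) : 0 ≤ chordalDist w x y := by
  unfold chordalDist
  positivity

theorem chordalDist_comm (x y : E) : chordalDist w x y = chordalDist w y x := by
  rw [chordalDist, chordalDist, w.map_sub, mul_comm]

theorem chordalDist_le_one (hw : IsNonarchimedean w) (x y : E) : chordalDist w x y ≤ 1 := by
  have hsub : w (x - y) ≤ max (w x) (w y) := by
    simpa only [sub_eq_add_neg, w.map_neg] using hw x (-y)
  refine div_le_one_of_le₀ (hsub.trans (max_le ?_ ?_)) (by positivity)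
  · exact (le_max_right 1 _).trans (le_mul_of_one_le_right (by positivity) (le_max_left _ _))
  · exact (le_max_right 1 _).trans (le_mul_of_one_le_left (by positivity) (le_max_left _ _))

theorem chordalDist_le_apply_sub (x y : E) : chordalDist w x y ≤ w (x - y) :=
  div_le_self (w.nonneg _) (one_le_mul_of_one_le_of_one_le (le_max_left _ _) (le_max_left _ _))

theorem prod_offDiag_chordalDist_le_sq (hw : IsNonarchimedean w) {s : Finset E} {x y : E}
    (hx : x ∈ s) (hy : y ∈ s) (hxy : x ≠ y) :
    ∏ p ∈ s.offDiag, chordalDist w p.1 p.2 ≤ chordalDist w x y ^ 2 := by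
  classical
  have hsub : {(x, y), (y, x)} ⊆ s.offDiag := by grind
  calc ∏ p ∈ s.offDiag, chordalDist w p.1 p.2
      ≤ ∏ p ∈ {(x, y), (y, x)}, chordalDist w p.1 p.2 :=
        Finset.prod_le_prod_of_subset_of_le_one hsub (fun _ _ => chordalDist_nonneg _ _)
          fun _ _ _ => chordalDist_le_one hw _ _
    _ = chordalDist w x y ^ 2 := by
        rw [Finset.prod_pair (by simp [hxy]), chordalDist_comm y x, sq]

end ChordalDist

section DiscriminantBound

variable {E : Type*} [CommRing E] {w : AbsoluteValue E ℝ}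

theorem apply_discr_eq_gaussNorm_pow_mul_prod_chordalDist [IsDomain E] [DecidableEq E]
    (hw : IsNonarchimedean w) {Q : E[X]} (hQ : Q.Splits) (hnodup : Q.roots.Nodup) :
    w Q.discr = Q.gaussNorm w 1 ^ (2 * (Q.natDegree - 1)) *
      ∏ p ∈ Q.roots.toFinset.offDiag, chordalDist w p.1 p.2 := by
  set s := Q.roots.toFinset
  have hval : s.val = Q.roots := by rw [Multiset.toFinset_val, hnodup.dedup]
  have hcard : s.card = Q.natDegree := by
    rw [Multiset.toFinset_card_of_nodup hnodup, hQ.natDegree_eq_card_roots]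
  have hgauss : Q.gaussNorm w 1 = w Q.leadingCoeff * ∏ x ∈ s, max 1 (w x) := by
    rw [gaussNorm_one_eq_leadingCoeff_mul_prod_roots hw hQ, Finset.prod, hval]
  have hsub : ∏ p ∈ s.offDiag, w (p.1 - p.2) =
      (∏ x ∈ s, max 1 (w x)) ^ (2 * (Q.natDegree - 1)) *
        ∏ p ∈ s.offDiag, chordalDist w p.1 p.2 := by
    rw [← hcard, ← prod_offDiag_mul, ← Finset.prod_mul_distrib]
    exact Finset.prod_congr rfl fun p _ => (mul_div_cancel₀ _ (by positivity)).symm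
  have hdiscr := congrArg w (discr_eq_prod_roots_sub hQ hnodup)
  rw [map_mul, map_pow, w.map_neg, w.map_one, one_pow, one_mul] at hdiscr
  rw [hdiscr, map_mul, map_pow, map_prod, hsub, hgauss, mul_pow, mul_assoc]

theorem injective_of_one_le_apply {A : Type*} [Ring A] {ψ : A →+* E}
    (hψ : ∀ a, a ≠ 0 → 1 ≤ w (ψ a)) : Function.Injective ψ := by
  refine (injective_iff_map_eq_zero ψ).2 fun a ha => by_contra fun h0 => ?_
  simpa [ha] using (hψ a h0).trans_lt' one_pos

theorem one_le_gaussNorm_pow_mul_chordalDist [IsDomain E] {A : Type*} [CommRing A]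
    (hw : IsNonarchimedean w) {ψ : A →+* E} (hψ : ∀ a, a ≠ 0 → 1 ≤ w (ψ a)) {R : A[X]}
    (hsplits : (R.map ψ).Splits) (hnodup : (R.map ψ).roots.Nodup) {γ δ : E}
    (hγ : γ ∈ (R.map ψ).roots) (hδ : δ ∈ (R.map ψ).roots) (hne : γ ≠ δ) :
    1 ≤ (R.map ψ).gaussNorm w 1 ^ (R.natDegree - 1) * chordalDist w γ δ := by
  classical
  have hinj : Function.Injective ψ := injective_of_one_le_apply hψ
  set Q := R.map ψ
  have hdeg : Q.natDegree = R.natDegree := natDegree_map_eq_of_injective hinj R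
  have hmap : Q.discr = ψ R.discr := discr_map_of_injective hinj R
  have hQ : Q ≠ 0 := ne_zero_of_mem_roots hγ
  have hdiscr : R.discr ≠ 0 := fun h =>
    discr_ne_zero_of_nodup_roots hsplits hQ hnodup (by rw [hmap, h, map_zero])
  have hgauss : 0 < Q.gaussNorm w 1 := gaussNorm_pos hQ
  have hchordal : 0 ≤ chordalDist w γ δ := chordalDist_nonneg γ δ
  refine (one_le_sq_iff₀ (by positivity)).1 ?_
  calc 1 ≤ w Q.discr := hmap ▸ hψ _ hdiscr
    _ = Q.gaussNorm w 1 ^ (2 * (R.natDegree - 1)) *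
          ∏ p ∈ Q.roots.toFinset.offDiag, chordalDist w p.1 p.2 := by
        rw [apply_discr_eq_gaussNorm_pow_mul_prod_chordalDist hw hsplits hnodup, hdeg]
    _ ≤ Q.gaussNorm w 1 ^ (2 * (R.natDegree - 1)) * chordalDist w γ δ ^ 2 := by
        gcongr
        exact prod_offDiag_chordalDist_le_sq hw (Multiset.mem_toFinset.2 hγ)
          (Multiset.mem_toFinset.2 hδ) hne
    _ = (Q.gaussNorm w 1 ^ (R.natDegree - 1) * chordalDist w γ δ) ^ 2 := by ring

end DiscriminantBound

section InseparableDegree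

variable {A : Type*} [CommRing A]

/-- The inseparable degree of a polynomial over a ring of exponential characteristic `p`: the
largest power `f` of `p` such that the polynomial has the form `R (X ^ f)`. For `p = 1`, and for
constant polynomials, the set of exponents is unbounded and the value is `1`. -/
def inseparableDegree (p : ℕ) (P : A[X]) : ℕ :=
  p ^ sSup {j : ℕ | ∃ R : A[X], P = R.comp (X ^ p ^ j)}

theorem bddAbove_exponents_of_comp_X_pow {p : ℕ} (hp : 1 < p) {P : A[X]} (hP : P.natDegree ≠ 0) :
    BddAbove {j : ℕ | ∃ R : A[X], P = R.comp (X ^ p ^ j)} := by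
  refine ⟨P.natDegree, ?_⟩
  rintro j ⟨R, rfl⟩
  rw [← expand_eq_comp_X_pow, natDegree_expand] at hP ⊢
  exact (Nat.lt_pow_self hp).le.trans (Nat.le_mul_of_pos_left _ (by grind))

theorem exists_expand_inseparableDegree [IsDomain A] (p : ℕ) [hp : ExpChar A p] {P : A[X]}
    (hP : P.natDegree ≠ 0) :
    ∃ (j : ℕ) (R : A[X]), inseparableDegree p P = p ^ j ∧ P = expand A (p ^ j) R ∧
      derivative R ≠ 0 := by
  rcases hp with _ | hprime
  · refine ⟨0, P, by simp [inseparableDegree], by simp, fun h => hP ?_⟩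
    exact derivative_eq_zero.1 h
  · have hbdd := bddAbove_exponents_of_comp_X_pow hprime.one_lt hP
    obtain ⟨R, hR⟩ := Nat.sSup_mem (by use 0, P; simp) hbdd
    rw [← expand_eq_comp_X_pow] at hR
    refine ⟨_, R, rfl, hR, fun hder => ?_⟩
    refine (le_csSup hbdd ⟨contract p R, ?_⟩).not_gt (Nat.lt_succ_self _)
    rwa [← expand_eq_comp_X_pow, Nat.succ_eq_add_one, pow_succ, expand_mul,
      expand_contract p hder hprime.ne_zero]

theorem separable_map_of_irreducible {E : Type*} [IsDomain A] [IsGCDMonoid A] [Field E]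
    {ψ : A →+* E} (hψ : Function.Injective ψ) {R : A[X]} (hR : Irreducible R)
    (hder : derivative R ≠ 0) : (R.map ψ).Separable := by
  have hdeg : R.natDegree ≠ 0 := fun h => hder (derivative_of_natDegree_zero h)
  have hirr : Irreducible (R.map (algebraMap A (FractionRing A))) :=
    (hR.isPrimitive hdeg).irreducible_iff_irreducible_map_fraction_map.1 hR
  have hsep : (R.map (algebraMap A (FractionRing A))).Separable := by
    rwa [separable_iff_derivative_ne_zero hirr, derivative_map, Ne,
      Polynomial.map_eq_zero_iff (IsFractionRing.injective A (FractionRing A))]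
  have hlift : (IsFractionRing.lift hψ).comp (algebraMap A (FractionRing A)) = ψ :=
    RingHom.ext (IsFractionRing.lift_algebraMap hψ)
  rw [← hlift, ← Polynomial.map_map]
  exact hsep.map

end InseparableDegree

theorem rpow_le_of_one_le_pow_mul_pow {H D : ℝ} (hH : 0 < H) (hD : 0 ≤ D) {d f : ℕ} (hd : d ≠ 0)
    (hf : f ≠ 0) (h : 1 ≤ H ^ (d - 1) * D ^ f) :
    H ^ (-((d * f : ℕ) : ℝ) / (f : ℝ) ^ 2 + 1 / (f : ℝ)) ≤ D := by
  have hexp : -((d * f : ℕ) : ℝ) / (f : ℝ) ^ 2 + 1 / (f : ℝ) =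
      -((d - 1 : ℕ) : ℝ) * (f : ℝ)⁻¹ := by
    rw [Nat.cast_sub (Nat.one_le_iff_ne_zero.2 hd)]
    push_cast
    field_simp
    ring
  have hle : H ^ (-((d - 1 : ℕ) : ℝ)) ≤ D ^ f := by
    rwa [Real.rpow_neg hH.le, Real.rpow_natCast, inv_le_iff_one_le_mul₀' (by positivity)]
  calc H ^ (-((d * f : ℕ) : ℝ) / (f : ℝ) ^ 2 + 1 / (f : ℝ))
      = (H ^ (-((d - 1 : ℕ) : ℝ))) ^ (f : ℝ)⁻¹ := by rw [hexp, Real.rpow_mul hH.le]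
    _ ≤ (D ^ f) ^ (f : ℝ)⁻¹ := by gcongr
    _ = D := Real.pow_rpow_inv_natCast hD hf

theorem stmt7_general {A E : Type*} [CommRing A] [IsDomain A] [IsGCDMonoid A] [Field E]
    [IsAlgClosed E] (p : ℕ) [ExpChar A p] {ψ : A →+* E} {w : AbsoluteValue E ℝ}
    (hw : IsNonarchimedean w) (hψ : ∀ a, a ≠ 0 → 1 ≤ w (ψ a)) {P : A[X]} (hP : Irreducible P)
    {α β : E} (hne : α ≠ β) (hα : P.eval₂ ψ α = 0) (hβ : P.eval₂ ψ β = 0) :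
    (P.map ψ).gaussNorm w 1 ^
        (-(P.natDegree : ℝ) / (inseparableDegree p P : ℝ) ^ 2 + 1 / (inseparableDegree p P : ℝ)) ≤
      w (α - β) := by
  have hinj : Function.Injective ψ := injective_of_one_le_apply hψ
  have : ExpChar E p := expChar_of_injective_ringHom hinj p
  have hdeg : P.natDegree ≠ 0 :=
    (natDegree_pos_of_eval₂_root hP.ne_zero ψ hα ((injective_iff_map_eq_zero ψ).1 hinj)).ne'
  obtain ⟨j, R, hins, rfl, hder⟩ := exists_expand_inseparableDegree p hdeg
  have hf : 0 < p ^ j := expChar_pow_pos A p j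
  rw [natDegree_expand] at hdeg
  have hsep : (R.map ψ).Separable :=
    separable_map_of_irreducible hinj (of_irreducible_expand hf.ne' hP) hder
  have hroot {x : E} (hx : (expand A (p ^ j) R).eval₂ ψ x = 0) : x ^ p ^ j ∈ (R.map ψ).roots := by
    rwa [mem_roots hsep.ne_zero, IsRoot, ← expand_eval, ← map_expand, eval_map]
  have hpow : (α - β) ^ p ^ j = α ^ p ^ j - β ^ p ^ j := sub_pow_expChar_pow ..
  have hne' : α ^ p ^ j ≠ β ^ p ^ j :=
    sub_ne_zero.1 (hpow ▸ pow_ne_zero _ (sub_ne_zero.2 hne))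
  rw [hins, natDegree_expand, map_expand, gaussNorm_expand w zero_le_one hf, one_pow]
  refine rpow_le_of_one_le_pow_mul_pow (gaussNorm_pos hsep.ne_zero) (w.nonneg _)
    (left_ne_zero_of_mul hdeg) hf.ne' ?_
  calc 1 ≤ (R.map ψ).gaussNorm w 1 ^ (R.natDegree - 1) * chordalDist w (α ^ p ^ j) (β ^ p ^ j) :=
        one_le_gaussNorm_pow_mul_chordalDist hw hψ (IsAlgClosed.splits _) (nodup_roots hsep)
          (hroot hα) (hroot hβ) hne'
    _ ≤ (R.map ψ).gaussNorm w 1 ^ (R.natDegree - 1) * w (α - β) ^ p ^ j := by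
        have hgauss := gaussNorm_nonneg w (R.map ψ) zero_le_one
        rw [← map_pow, hpow]
        gcongr
        exact chordalDist_le_apply_sub _ _

section LaurentSeries

theorem polyToK_coeff {k : Type} [Field k] (x : k[X]) (n : ℕ) :
    (polyToK k x).coeff (-(n : ℤ)) = x.coeff n := by
  induction x using Polynomial.induction_on' with
  | add p q hp hq => rw [map_add, HahnSeries.coeff_add, hp, hq, coeff_add]
  | monomial m a =>
    have hmonomial : polyToK k (monomial m a) = HahnSeries.single (-(m : ℤ)) a := by
      simp [polyToK, TT, eval₂_monomial, HahnSeries.C_apply, HahnSeries.single_pow]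
    rw [hmonomial, HahnSeries.coeff_single, coeff_monomial]
    simp [eq_comm]

theorem polyToK_injective {k : Type} [Field k] : Function.Injective (polyToK k) := by
  refine (injective_iff_map_eq_zero _).2 fun x hx => ?_
  ext n
  rw [← polyToK_coeff, hx, HahnSeries.coeff_zero, coeff_zero]

theorem one_le_kabs_polyToK {x : Fq[X]} (hx : x ≠ 0) : 1 ≤ kabs Fq (polyToK Fq x) := by
  have hne : polyToK Fq x ≠ 0 := (map_ne_zero_iff _ polyToK_injective).2 hx
  have horder : (polyToK Fq x).order ≤ -(x.natDegree : ℤ) := by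
    refine HahnSeries.order_le_of_coeff_ne_zero ?_
    rw [polyToK_coeff]
    exact leadingCoeff_ne_zero.2 hx
  rw [kabs, if_neg hne]
  exact one_le_zpow₀ (mod_cast Fintype.card_pos) (by lia)

variable {Fq} {v : L Fq → ℝ}

/-- The extension `v` of the absolute value of `F_q((T⁻¹))`, as a bundled absolute value. -/
def IsAbsExt.toAbsoluteValue (hv : IsAbsExt Fq v) : AbsoluteValue (L Fq) ℝ where
  toFun := v
  map_mul' := hv.map_mul
  nonneg' := hv.nonneg
  eq_zero' := hv.eq_zero_iff
  add_le' x y := (hv.add_le x y).trans (max_le_add_of_nonneg (hv.nonneg x) (hv.nonneg y))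

theorem IsAbsExt.apply_φ (hv : IsAbsExt Fq v) (x : Fq[X]) : v (φ Fq x) = kabs Fq (polyToK Fq x) :=
  hv.extends_kabs _

theorem IsAbsExt.Hpoly_eq_gaussNorm (hv : IsAbsExt Fq v) (P : Fq[X][X]) :
    Hpoly Fq P = (P.map (φ Fq)).gaussNorm hv.toAbsoluteValue 1 := by
  have hcoeff (i : ℕ) : kabs Fq (polyToK Fq (P.coeff i)) =
      hv.toAbsoluteValue ((P.map (φ Fq)).coeff i) * 1 ^ i := by
    rw [← hv.apply_φ, one_pow, mul_one, coeff_map]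
    rfl
  have hle (i : ℕ) : kabs Fq (polyToK Fq (P.coeff i)) ≤
      (P.map (φ Fq)).gaussNorm hv.toAbsoluteValue 1 :=
    (hcoeff i).trans_le (le_gaussNorm _ _ zero_le_one i)
  apply le_antisymm (ciSup_le hle)
  obtain ⟨i, hi⟩ := exists_eq_gaussNorm hv.toAbsoluteValue 1 (P.map (φ Fq))
  rw [hi, ← hcoeff]
  exact le_ciSup (f := fun i => kabs Fq (polyToK Fq (P.coeff i))) ⟨_, Set.forall_mem_range.2 hle⟩ i

end LaurentSeries

theorem stmt7 (Fq : Type) [Field Fq] [Fintype Fq]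
    (v : L Fq → ℝ) (hv : IsAbsExt Fq v)
    (P : Polynomial (Polynomial Fq)) (hirr : Irreducible P) (hdeg : 2 ≤ P.natDegree)
    (α β : L Fq) (hne : α ≠ β)
    (hα : evalL Fq P α = 0) (hβ : evalL Fq P β = 0) :
    Hpoly Fq P ^ (-(P.natDegree : ℝ) / (insepDeg Fq P : ℝ) ^ 2 + 1 / (insepDeg Fq P : ℝ)) ≤
      v (α - β) := by
  have : ExpChar Fq[X] (ringChar Fq) := ExpChar.prime (CharP.char_is_prime Fq _)
  rw [hv.Hpoly_eq_gaussNorm]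
  exact stmt7_general (ringChar Fq) (w := hv.toAbsoluteValue) hv.add_le
    (fun _ hx => (one_le_kabs_polyToK Fq hx).trans_eq (hv.apply_φ _).symm) hirr hne hα hβ

end Ooto
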